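/- arXiv:1803.11026 — 2 statements merged into one kernel-verified Lean document; each statement's English description precedes it below -/
import Mathlib

section
/- One has f̃(r) ≥ j̃(r) for all r ≥ 0, i.e. f_β(z) ≥ j_μ(z) pointwise, where j_μ(z) := j̃(|z|)/|z|. Consequently, the function g_β := 1 − f_β satisfies 0 ≤ g_β(z) ≤ μa/|z| for all z ≠ 0, and g_β(z) = 0 for |z| ≥ R_β. -/
open Set

/-- The radial scattering data: the rescaled interaction `w_μ(r) = μ⁻² w(r/μ)` (given through its
radial profile `w`), its zero-energy scattering solution `j̃` in radial form, and for each `κ ≥ 1`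
the function `f̃_κ` which equals `κ j̃` on `[0, μ^β̃]` and solves
`f̃_κ'' = -½ a μ^(1-3β̃) f̃_κ` beyond `μ^β̃`. -/
structure ScatteringODE where
  a : ℝ
  beta : ℝ
  mu : ℝ
  w : ℝ → ℝ
  jt : ℝ → ℝ
  jt' : ℝ → ℝ
  ft : ℝ → ℝ → ℝ
  ft' : ℝ → ℝ → ℝ
  ha : 0 < a
  hbeta : beta ∈ Set.Ioo (1/3 : ℝ) 1
  hmu : mu ∈ Set.Ioo (0 : ℝ) 1
  hw_nonneg : ∀ r, 0 ≤ w r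
  hw_bdd : ∃ M, ∀ r, w r ≤ M
  hw_supp : ∀ r, 1 < r → w r = 0
  hjt_deriv : ∀ r, HasDerivAt jt (jt' r) r
  hjt_zero : jt 0 = 0
  hjt_ode : ∀ r ∈ Set.Ioo 0 mu, HasDerivAt jt' ((1/2) * (mu⁻¹ ^ 2 * w (r / mu)) * jt r) r
  hjt_lin : ∀ r, mu ≤ r → jt r = r - mu * a
  hjt_nonneg : ∀ r, 0 ≤ r → 0 ≤ jt r
  hjt_mono : MonotoneOn jt (Set.Ici 0)
  hjt_le : ∀ r, 0 ≤ r → jt r ≤ r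
  hft_deriv : ∀ κ r : ℝ, HasDerivAt (ft κ) (ft' κ r) r
  hft_eq : ∀ κ : ℝ, ∀ r ∈ Set.Icc (0:ℝ) (mu ^ beta), ft κ r = κ * jt r
  hft_ode : ∀ κ r : ℝ, mu ^ beta < r →
      HasDerivAt (ft' κ) (-(1/2) * a * mu ^ (1 - 3 * beta) * ft κ r) r

/-- A scattering setup together with the tangency parameter `κ_β ∈ (1, μ^β̃/(μ^β̃ - μa))` and the
minimal tangency radius `R_β ∈ (μ^β̃, ∞)` at which `f̃_{κ_β}` is tangent to the line `r ↦ r`. -/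
structure TangentScattering extends ScatteringODE where
  hsmall : mu * a < mu ^ beta
  kappa : ℝ
  Rb : ℝ
  hkappa : kappa ∈ Set.Ioo 1 (mu ^ beta / (mu ^ beta - mu * a))
  hRb : mu ^ beta < Rb
  htan_val : ft kappa Rb = Rb
  htan_der : ft' kappa Rb = 1
  hRb_min : ∀ R : ℝ, mu ^ beta < R → ft kappa R = R → ft' kappa R = 1 → Rb ≤ R

/-- The radial form `f̃` of the scattering solution `f_β`, extended by `f̃(r) = r` for `r ≥ R_β`. -/
noncomputable def TangentScattering.fext (S : TangentScattering) (r : ℝ) : ℝ :=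
  if r < S.Rb then S.ft S.kappa r else r

/-- The scattering solution `f_β(z) = f̃(|z|)/|z|` (for `z ≠ 0`). -/
noncomputable def TangentScattering.fbeta (S : TangentScattering)
    (z : EuclideanSpace ℝ (Fin 3)) : ℝ :=
  S.fext ‖z‖ / ‖z‖

/-- Its complement `g_β = 1 - f_β`. -/
noncomputable def TangentScattering.gbeta (S : TangentScattering)
    (z : EuclideanSpace ℝ (Fin 3)) : ℝ :=
  1 - S.fbeta z

/-! The theorem holds as soon as `μa ≤ μ^β̃ / 2`. Beyond the matching radius `ρ = μ^β̃` the
function `f̃` satisfies `f̃'' = -ω² f̃` with `(ωρ)² = μa / (2ρ) ≤ 1/4`. Conservation of energy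
between `ρ` and the point of tangency `R` reads `1 + (ωR)² = κ² + ω² f̃(ρ)²`, and `κ < 2`,
`f̃(ρ) < ρ` bound the right hand side by `4 + 1/4`, so that `ωR < π`. A solution which is
positive at two points less than half a period apart is positive in between; hence `f̃` is
positive, and therefore concave, on `[ρ, R]`. There it lies below its tangent at `R`, the
diagonal, and `f̃ - id`, being concave too, lies above the smaller of its values at `ρ` and `R`,
both of which are at least `-μa`. On `[0, ρ]` both bounds follow from `f̃ = κ j̃` and the
monotonicity of `j̃(r) / r`. -/

section Oscillator

open Real

/-- The function `f`, with derivative `f'`, solves the harmonic oscillator equation `f'' = -ω² f`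
to the right of `ρ`. At `ρ` itself only a right derivative is required, and no equation. -/
structure IsOscillatorSolution (ω ρ : ℝ) (f f' : ℝ → ℝ) : Prop where
  hasDerivWithinAt : ∀ r ∈ Ici ρ, HasDerivWithinAt f (f' r) (Ici ρ) r
  hasDerivAt_deriv : ∀ r, ρ < r → HasDerivAt f' (-ω ^ 2 * f r) r

namespace IsOscillatorSolution

variable {ω ρ : ℝ} {f f' : ℝ → ℝ}

lemma hasDerivAt (h : IsOscillatorSolution ω ρ f f') {r : ℝ} (hr : ρ < r) :
    HasDerivAt f (f' r) r :=
  (h.hasDerivWithinAt r hr.le).hasDerivAt (Ici_mem_nhds hr)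

lemma continuousOn (h : IsOscillatorSolution ω ρ f f') : ContinuousOn f (Ici ρ) :=
  fun r hr => (h.hasDerivWithinAt r hr).continuousWithinAt

lemma eqOn_Ioi (h : IsOscillatorSolution ω ρ f f') (hω : ω ≠ 0) {x : ℝ} (hx : ρ < x) :
    EqOn f (fun r => f x * cos (ω * (r - x)) + f' x / ω * sin (ω * (r - x))) (Ioi ρ) := by
  intro r hr
  -- The Wronskian of `f` and `s ↦ sin (ω (s - r))` is constant.
  let W : ℝ → ℝ := fun s => f' s * sin (ω * (s - r)) - f s * (ω * cos (ω * (s - r)))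
  have hW : ∀ s ∈ Ioi ρ, HasDerivAt W 0 s := by
    intro s hs
    have harg : HasDerivAt (fun s => ω * (s - r)) ω s := by
      simpa only [mul_one] using ((hasDerivAt_id' s).sub_const r).const_mul ω
    refine (((h.hasDerivAt_deriv s hs).fun_mul harg.sin).fun_sub
      ((h.hasDerivAt hs).fun_mul (harg.cos.const_mul ω))).congr_deriv ?_
    ring
  have hWxr : W x = W r := isOpen_Ioi.is_const_of_deriv_eq_zero isPreconnected_Ioi
    (fun s hs => (hW s hs).differentiableAt.differentiableWithinAt)
    (fun s hs => (hW s hs).deriv) hx hr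
  have hneg : ω * (r - x) = -(ω * (x - r)) := by ring
  simp only [W, sub_self, mul_zero, sin_zero, cos_zero, mul_one, zero_sub] at hWxr
  simp only [hneg, cos_neg, sin_neg]
  field_simp
  linarith

theorem eqOn_Ici (h : IsOscillatorSolution ω ρ f f') (hω : ω ≠ 0) {x : ℝ} (hx : ρ < x) :
    EqOn f (fun r => f x * cos (ω * (r - x)) + f' x / ω * sin (ω * (r - x))) (Ici ρ) :=
  (h.eqOn_Ioi hω hx).of_subset_closure h.continuousOn (by fun_prop) Ioi_subset_Ici_self
    (closure_Ioi ρ).ge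

lemma deriv_eqOn_Ici (h : IsOscillatorSolution ω ρ f f') (hω : ω ≠ 0) {x : ℝ} (hx : ρ < x) :
    EqOn f' (fun r => f' x * cos (ω * (r - x)) - ω * f x * sin (ω * (r - x))) (Ici ρ) := by
  intro r hr
  have harg : HasDerivAt (fun r => ω * (r - x)) ω r := by
    simpa only [mul_one] using ((hasDerivAt_id' r).sub_const x).const_mul ω
  have hsol := ((harg.cos.const_mul (f x)).fun_add
    (harg.sin.const_mul (f' x / ω))).hasDerivWithinAt.congr
      (h.eqOn_Ici hω hx) (h.eqOn_Ici hω hx hr)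
  rw [(uniqueDiffOn_Ici ρ r hr).eq_deriv _ (h.hasDerivWithinAt r hr) hsol]
  field_simp
  ring

theorem energy_eq (h : IsOscillatorSolution ω ρ f f') (hω : ω ≠ 0) {r x : ℝ} (hr : ρ ≤ r)
    (hx : ρ < x) : f' r ^ 2 + ω ^ 2 * f r ^ 2 = f' x ^ 2 + ω ^ 2 * f x ^ 2 := by
  rw [h.eqOn_Ici hω hx hr, h.deriv_eqOn_Ici hω hx hr]
  field_simp
  linear_combination (f' x ^ 2 + ω ^ 2 * f x ^ 2) * sin_sq_add_cos_sq (ω * (r - x))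

theorem sin_mul_eq (h : IsOscillatorSolution ω ρ f f') (hω : ω ≠ 0) {x r y : ℝ} (hx : ρ ≤ x)
    (hr : ρ ≤ r) (hy : ρ < y) :
    sin (ω * (y - x)) * f r = sin (ω * (y - r)) * f x + sin (ω * (r - x)) * f y := by
  have hyx : ω * (y - x) = -(ω * (x - y)) := by ring
  have hyr : ω * (y - r) = -(ω * (r - y)) := by ring
  have hrx : ω * (r - x) = ω * (r - y) - ω * (x - y) := by ring
  rw [h.eqOn_Ici hω hy hx, h.eqOn_Ici hω hy hr, hyx, hyr, hrx, sin_neg, sin_neg, sin_sub]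
  ring

theorem pos_of_mem_Icc (h : IsOscillatorSolution ω ρ f f') (hω : 0 < ω) {x y : ℝ} (hx : ρ ≤ x)
    (hxy : x < y) (hπ : ω * (y - x) < π) (hfx : 0 < f x) (hfy : 0 < f y) :
    ∀ r ∈ Icc x y, 0 < f r := by
  rintro r ⟨hxr, hry⟩
  rcases hry.eq_or_lt with rfl | hry
  · exact hfy
  have hsin {s : ℝ} (hs : 0 < s) (hsy : s ≤ y - x) : 0 < sin (ω * s) :=
    sin_pos_of_pos_of_lt_pi (mul_pos hω hs) ((mul_le_mul_of_nonneg_left hsy hω.le).trans_lt hπ)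
  have hsin_rx : 0 ≤ sin (ω * (r - x)) := by
    rcases hxr.eq_or_lt with rfl | hxr
    · simp
    · exact (hsin (sub_pos.2 hxr) (by linarith)).le
  refine pos_of_mul_pos_right ?_ (hsin (sub_pos.2 hxy) le_rfl).le
  rw [h.sin_mul_eq hω.ne' hx (hx.trans hxr) (hx.trans_lt hxy)]
  exact add_pos_of_pos_of_nonneg (mul_pos (hsin (sub_pos.2 hry) (by linarith)) hfx)
    (mul_nonneg hsin_rx hfy.le)

theorem concaveOn (h : IsOscillatorSolution ω ρ f f') {x y : ℝ} (hx : ρ ≤ x)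
    (hf : ∀ r ∈ Icc x y, 0 ≤ f r) : ConcaveOn ℝ (Icc x y) f := by
  have hint : ∀ r ∈ interior (Icc x y), ρ < r := fun r hr => by
    rw [interior_Icc] at hr
    exact hx.trans_lt hr.1
  exact concaveOn_of_hasDerivWithinAt2_nonpos (convex_Icc _ _)
    (h.continuousOn.mono (Icc_subset_Ici_self.trans (Ici_subset_Ici.2 hx)))
    (fun r hr => (h.hasDerivAt (hint r hr)).hasDerivWithinAt)
    (fun r hr => (h.hasDerivAt_deriv r (hint r hr)).hasDerivWithinAt)
    (fun r hr => mul_nonpos_of_nonpos_of_nonneg (neg_nonpos.2 (sq_nonneg ω))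
      (hf r (interior_subset hr)))

end IsOscillatorSolution

end Oscillator

namespace ScatteringODE

variable (S : ScatteringODE)

lemma rpow_beta_pos : 0 < S.mu ^ S.beta :=
  Real.rpow_pos_of_pos S.hmu.1 _

lemma mu_lt_rpow_beta : S.mu < S.mu ^ S.beta := by
  simpa only [Real.rpow_one] using Real.rpow_lt_rpow_of_exponent_gt S.hmu.1 S.hmu.2 S.hbeta.2

lemma jt'_eq_one {r : ℝ} (hr : S.mu ≤ r) : S.jt' r = 1 :=
  (uniqueDiffOn_Ici S.mu r hr).eq_deriv _ (S.hjt_deriv r).hasDerivWithinAt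
    (((hasDerivAt_id' r).sub_const (S.mu * S.a)).hasDerivWithinAt.congr
      (fun s hs => S.hjt_lin s hs) (S.hjt_lin r hr))

lemma convexOn_jt : ConvexOn ℝ (Icc 0 S.mu) S.jt := by
  refine convexOn_of_hasDerivWithinAt2_nonneg (convex_Icc _ _)
    (fun r _ => (S.hjt_deriv r).continuousAt.continuousWithinAt)
    (fun r _ => (S.hjt_deriv r).hasDerivWithinAt)
    (f'' := fun r => (1/2) * (S.mu⁻¹ ^ 2 * S.w (r / S.mu)) * S.jt r) ?_ ?_ <;>
    rw [interior_Icc]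
  · exact fun r hr => (S.hjt_ode r hr).hasDerivWithinAt
  · intro r hr
    have hw := S.hw_nonneg (r / S.mu)
    have hj := S.hjt_nonneg r hr.1.le
    positivity

lemma sub_le_jt {r : ℝ} (hr : 0 ≤ r) : r - S.mu * S.a ≤ S.jt r := by
  rcases lt_or_ge r S.mu with hrmu | hmur
  · have hslope := S.convexOn_jt.slope_le_of_hasDerivAt ⟨hr, hrmu.le⟩
      (right_mem_Icc.2 S.hmu.1.le) hrmu (S.hjt_deriv S.mu)
    rw [S.jt'_eq_one le_rfl, slope_def_field, div_le_one (sub_pos.2 hrmu),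
      S.hjt_lin _ le_rfl] at hslope
    linarith
  · exact (S.hjt_lin r hmur).ge

lemma monotoneOn_jt_div_id : MonotoneOn (fun r => S.jt r / r) (Ioi 0) := by
  have hinner : MonotoneOn (fun r => S.jt r / r) (Ioc 0 S.mu) := by
    intro x hx y hy hxy
    simpa only [S.hjt_zero, sub_zero] using S.convexOn_jt.secant_mono
      (left_mem_Icc.2 S.hmu.1.le) (Ioc_subset_Icc_self hx) (Ioc_subset_Icc_self hy)
      hx.1.ne' hy.1.ne' hxy
  have houter : MonotoneOn (fun r => S.jt r / r) (Ici S.mu) := by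
    intro x hx y hy hxy
    have hx0 : 0 < x := S.hmu.1.trans_le hx
    have hy0 : 0 < y := S.hmu.1.trans_le hy
    simp only [S.hjt_lin x hx, S.hjt_lin y hy, sub_div, div_self hx0.ne', div_self hy0.ne']
    exact sub_le_sub_left (div_le_div_of_nonneg_left (mul_pos S.hmu.1 S.ha).le hx0 hxy) 1
  simpa only [Ioc_union_Ici_eq_Ioi S.hmu.1] using
    hinner.union_right houter (isGreatest_Ioc S.hmu.1) isLeast_Ici

lemma ft_rpow_beta (κ : ℝ) :
    S.ft κ (S.mu ^ S.beta) = κ * (S.mu ^ S.beta - S.mu * S.a) := by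
  rw [S.hft_eq κ _ (right_mem_Icc.2 S.rpow_beta_pos.le), S.hjt_lin _ S.mu_lt_rpow_beta.le]

lemma ft'_rpow_beta (κ : ℝ) : S.ft' κ (S.mu ^ S.beta) = κ := by
  have hmem : S.mu ^ S.beta ∈ Icc 0 (S.mu ^ S.beta) := right_mem_Icc.2 S.rpow_beta_pos.le
  have hinner : HasDerivWithinAt (S.ft κ) (κ * S.jt' (S.mu ^ S.beta)) (Icc 0 (S.mu ^ S.beta))
      (S.mu ^ S.beta) :=
    ((S.hjt_deriv _).const_mul κ).hasDerivWithinAt.congr (S.hft_eq κ) (S.hft_eq κ _ hmem)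
  rw [(uniqueDiffOn_Icc S.rpow_beta_pos _ hmem).eq_deriv _ (S.hft_deriv κ _).hasDerivWithinAt
    hinner, S.jt'_eq_one S.mu_lt_rpow_beta.le, mul_one]

/-- The frequency `ω` for which the equation satisfied by `f̃_κ` beyond `μ^β̃` reads
`f̃_κ'' = -ω² f̃_κ`. -/
noncomputable def freq : ℝ :=
  √(1 / 2 * S.a * S.mu ^ (1 - 3 * S.beta))

lemma freq_pos : 0 < S.freq :=
  Real.sqrt_pos.2 (mul_pos (mul_pos one_half_pos S.ha) (Real.rpow_pos_of_pos S.hmu.1 _))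

lemma freq_sq : S.freq ^ 2 = 1 / 2 * S.a * S.mu ^ (1 - 3 * S.beta) :=
  Real.sq_sqrt (Real.sqrt_pos.1 S.freq_pos).le

lemma freq_sq_mul_rpow_beta_pow : S.freq ^ 2 * (S.mu ^ S.beta) ^ 3 = S.mu * S.a / 2 := by
  have hmu : S.mu ^ (1 - 3 * S.beta) * (S.mu ^ S.beta) ^ 3 = S.mu := by
    rw [← Real.rpow_mul_natCast S.hmu.1.le, ← Real.rpow_add S.hmu.1, Nat.cast_ofNat,
      mul_comm S.beta, sub_add_cancel, Real.rpow_one]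
  rw [freq_sq, mul_assoc, hmu]
  ring

lemma isOscillatorSolution_ft (κ : ℝ) :
    IsOscillatorSolution S.freq (S.mu ^ S.beta) (S.ft κ) (S.ft' κ) where
  hasDerivWithinAt r _ := (S.hft_deriv κ r).hasDerivWithinAt
  hasDerivAt_deriv r hr := (S.hft_ode κ r hr).congr_deriv (by rw [freq_sq]; ring)

end ScatteringODE

namespace TangentScattering

variable (S : TangentScattering)

lemma kappa_pos : 0 < S.kappa :=
  zero_lt_one.trans S.hkappa.1

lemma kappa_mul_lt : S.kappa * (S.mu ^ S.beta - S.mu * S.a) < S.mu ^ S.beta :=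
  (lt_div_iff₀ (sub_pos.2 S.hsmall)).1 S.hkappa.2

lemma kappa_lt_two (hμ : S.mu * S.a ≤ S.mu ^ S.beta / 2) : S.kappa < 2 := by
  have hκ : S.kappa * (S.mu ^ S.beta / 2) ≤ S.kappa * (S.mu ^ S.beta - S.mu * S.a) :=
    mul_le_mul_of_nonneg_left (by linarith) S.kappa_pos.le
  refine lt_of_mul_lt_mul_right ?_ S.rpow_beta_pos.le
  linarith [S.kappa_mul_lt]

lemma freq_mul_Rb_lt_pi (hμ : S.mu * S.a ≤ S.mu ^ S.beta / 2) : S.freq * S.Rb < Real.pi := by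
  have hρ := S.rpow_beta_pos
  have henergy : S.kappa ^ 2 + S.freq ^ 2 * S.ft S.kappa (S.mu ^ S.beta) ^ 2
      = 1 + S.freq ^ 2 * S.Rb ^ 2 := by
    simpa only [S.ft'_rpow_beta, S.htan_val, S.htan_der, one_pow] using
      (S.isOscillatorSolution_ft S.kappa).energy_eq S.freq_pos.ne' le_rfl S.hRb
  have hκ : S.kappa ^ 2 ≤ 2 ^ 2 := pow_le_pow_left₀ S.kappa_pos.le (S.kappa_lt_two hμ).le 2
  have hft : S.ft S.kappa (S.mu ^ S.beta) ^ 2 ≤ (S.mu ^ S.beta) ^ 2 := by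
    rw [S.ft_rpow_beta]
    exact pow_le_pow_left₀ (mul_pos S.kappa_pos (sub_pos.2 S.hsmall)).le S.kappa_mul_lt.le 2
  have hfreq : S.freq ^ 2 * (S.mu ^ S.beta) ^ 2 ≤ 1 / 4 := by
    refine le_of_mul_le_mul_right ?_ hρ
    linarith [S.freq_sq_mul_rpow_beta_pow]
  have hsq : (S.freq * S.Rb) ^ 2 < 3 ^ 2 := by
    linarith [mul_pow S.freq S.Rb 2, mul_le_mul_of_nonneg_left hft (sq_nonneg S.freq)]
  exact (lt_of_pow_lt_pow_left₀ 2 zero_le_three hsq).trans Real.pi_gt_three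

lemma ft_pos (hμ : S.mu * S.a ≤ S.mu ^ S.beta / 2) :
    ∀ r ∈ Icc (S.mu ^ S.beta) S.Rb, 0 < S.ft S.kappa r := by
  have hperiod : S.freq * (S.Rb - S.mu ^ S.beta) < Real.pi :=
    (mul_le_mul_of_nonneg_left (sub_le_self _ S.rpow_beta_pos.le) S.freq_pos.le).trans_lt
      (S.freq_mul_Rb_lt_pi hμ)
  refine (S.isOscillatorSolution_ft S.kappa).pos_of_mem_Icc S.freq_pos le_rfl S.hRb hperiod ?_ ?_
  · rw [S.ft_rpow_beta]
    exact mul_pos S.kappa_pos (sub_pos.2 S.hsmall)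
  · rw [S.htan_val]
    exact S.rpow_beta_pos.trans S.hRb

lemma concaveOn_ft (hμ : S.mu * S.a ≤ S.mu ^ S.beta / 2) :
    ConcaveOn ℝ (Icc (S.mu ^ S.beta) S.Rb) (S.ft S.kappa) :=
  (S.isOscillatorSolution_ft S.kappa).concaveOn le_rfl fun r hr => (S.ft_pos hμ r hr).le

lemma kappa_mul_jt_le {r : ℝ} (hr : 0 < r) (hrρ : r ≤ S.mu ^ S.beta) :
    S.kappa * S.jt r ≤ r := by
  have hρ := S.rpow_beta_pos
  rw [← div_le_one hr]
  calc S.kappa * S.jt r / r = S.kappa * (S.jt r / r) := mul_div_assoc _ _ _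
    _ ≤ S.kappa * (S.jt (S.mu ^ S.beta) / S.mu ^ S.beta) :=
      mul_le_mul_of_nonneg_left (S.monotoneOn_jt_div_id hr hρ hrρ) S.kappa_pos.le
    _ = S.kappa * (S.mu ^ S.beta - S.mu * S.a) / S.mu ^ S.beta := by
      rw [S.hjt_lin _ S.mu_lt_rpow_beta.le, mul_div_assoc]
    _ ≤ 1 := (div_le_one hρ).2 S.kappa_mul_lt.le

lemma ft_le_self (hμ : S.mu * S.a ≤ S.mu ^ S.beta / 2) {r : ℝ}
    (hr : r ∈ Icc (S.mu ^ S.beta) S.Rb) : S.ft S.kappa r ≤ r := by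
  rcases hr.2.eq_or_lt with rfl | hrR
  · exact S.htan_val.le
  have hslope := (S.concaveOn_ft hμ).le_slope_of_hasDerivAt hr (right_mem_Icc.2 S.hRb.le) hrR
    (S.hft_deriv _ S.Rb)
  rw [S.htan_der, slope_def_field, one_le_div (sub_pos.2 hrR), S.htan_val] at hslope
  linarith

lemma sub_le_ft (hμ : S.mu * S.a ≤ S.mu ^ S.beta / 2) {r : ℝ}
    (hr : r ∈ Icc (S.mu ^ S.beta) S.Rb) : r - S.mu * S.a ≤ S.ft S.kappa r := by
  have hρR := S.hRb.le
  have hmin := ((S.concaveOn_ft hμ).sub (convexOn_id (convex_Icc _ _))).min_le_of_mem_Icc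
    (left_mem_Icc.2 hρR) (right_mem_Icc.2 hρR) hr
  simp only [Pi.sub_apply, id_eq, S.htan_val, sub_self, S.ft_rpow_beta] at hmin
  have hρ : -(S.mu * S.a) ≤ S.kappa * (S.mu ^ S.beta - S.mu * S.a) - S.mu ^ S.beta := by
    linarith [le_mul_of_one_le_left (sub_pos.2 S.hsmall).le S.hkappa.1.le]
  have hR : -(S.mu * S.a) ≤ 0 := neg_nonpos.2 (mul_pos S.hmu.1 S.ha).le
  linarith [(le_min hρ hR).trans hmin]

lemma fext_le_self (hμ : S.mu * S.a ≤ S.mu ^ S.beta / 2) {r : ℝ} (hr : 0 < r) :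
    S.fext r ≤ r := by
  rw [fext]
  split_ifs with hrR
  · rcases le_total r (S.mu ^ S.beta) with hrρ | hρr
    · rw [S.hft_eq _ _ ⟨hr.le, hrρ⟩]
      exact S.kappa_mul_jt_le hr hrρ
    · exact S.ft_le_self hμ ⟨hρr, hrR.le⟩
  · exact le_rfl

theorem jt_le_fext (hμ : S.mu * S.a ≤ S.mu ^ S.beta / 2) {r : ℝ} (hr : 0 ≤ r) :
    S.jt r ≤ S.fext r := by
  rw [fext]
  split_ifs with hrR
  · rcases le_total r (S.mu ^ S.beta) with hrρ | hρr
    · rw [S.hft_eq _ _ ⟨hr, hrρ⟩]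
      exact le_mul_of_one_le_left (S.hjt_nonneg r hr) S.hkappa.1.le
    · rw [S.hjt_lin r (S.mu_lt_rpow_beta.le.trans hρr)]
      exact S.sub_le_ft hμ ⟨hρr, hrR.le⟩
  · exact S.hjt_le r hr

lemma gbeta_eq {z : EuclideanSpace ℝ (Fin 3)} (hz : z ≠ 0) :
    S.gbeta z = (‖z‖ - S.fext ‖z‖) / ‖z‖ := by
  rw [gbeta, fbeta, sub_div, div_self (norm_ne_zero_iff.2 hz)]

lemma gbeta_mem_Icc (hμ : S.mu * S.a ≤ S.mu ^ S.beta / 2) {z : EuclideanSpace ℝ (Fin 3)}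
    (hz : z ≠ 0) : S.gbeta z ∈ Icc 0 (S.mu * S.a / ‖z‖) := by
  have hz₀ := norm_pos_iff.2 hz
  rw [S.gbeta_eq hz]
  refine ⟨div_nonneg (sub_nonneg.2 (S.fext_le_self hμ hz₀)) hz₀.le,
    div_le_div_of_nonneg_right ?_ hz₀.le⟩
  linarith [S.sub_le_jt hz₀.le, S.jt_le_fext hμ hz₀.le]

lemma gbeta_eq_zero {z : EuclideanSpace ℝ (Fin 3)} (hz : z ≠ 0) (hR : S.Rb ≤ ‖z‖) :
    S.gbeta z = 0 := by
  rw [S.gbeta_eq hz, fext, if_neg hR.not_gt, sub_self, zero_div]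

end TangentScattering

lemma exists_forall_mul_le_rpow_div_two {a b : ℝ} (ha : 0 < a) (hb : b < 1) :
    ∃ μ₀ > 0, ∀ μ : ℝ, 0 < μ → μ ≤ μ₀ → μ * a ≤ μ ^ b / 2 := by
  have hb' : 0 < 1 - b := sub_pos.2 hb
  have hpos : 0 < (2 * a)⁻¹ := by positivity
  refine ⟨(2 * a)⁻¹ ^ (1 - b)⁻¹, Real.rpow_pos_of_pos hpos _, fun μ hμ hμ₀ => ?_⟩
  have hle : μ ^ (1 - b) ≤ (2 * a)⁻¹ :=
    (Real.le_rpow_inv_iff_of_pos hμ.le hpos.le hb').1 hμ₀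
  calc μ * a = μ ^ b * (μ ^ (1 - b) * a) := by
        rw [← mul_assoc, ← Real.rpow_add hμ, add_sub_cancel, Real.rpow_one]
    _ ≤ μ ^ b * ((2 * a)⁻¹ * a) := by gcongr
    _ = μ ^ b / 2 := by field_simp

theorem fbeta_ge_scattering_sol_general (S : TangentScattering)
    (hμ : S.mu * S.a ≤ S.mu ^ S.beta / 2) :
    (∀ r : ℝ, 0 ≤ r → S.jt r ≤ S.fext r) ∧
      (∀ z : EuclideanSpace ℝ (Fin 3), z ≠ 0 → S.jt ‖z‖ / ‖z‖ ≤ S.fbeta z) ∧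
      (∀ z : EuclideanSpace ℝ (Fin 3), z ≠ 0 →
        0 ≤ S.gbeta z ∧ S.gbeta z ≤ S.mu * S.a / ‖z‖) ∧
      (∀ z : EuclideanSpace ℝ (Fin 3), z ≠ 0 → S.Rb ≤ ‖z‖ → S.gbeta z = 0) :=
  ⟨fun _ hr => S.jt_le_fext hμ hr,
    fun z _ => div_le_div_of_nonneg_right (S.jt_le_fext hμ (norm_nonneg z)) (norm_nonneg z),
    fun _ hz => S.gbeta_mem_Icc hμ hz,
    fun _ hz hR => S.gbeta_eq_zero hz hR⟩

/-- `f̃ ≥ j̃`, i.e. `f_β ≥ j_μ` pointwise (where `j_μ(z) = j̃(|z|)/|z|`); consequently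
`0 ≤ g_β(z) ≤ μa/|z|` for all `z ≠ 0`, and `g_β(z) = 0` for `|z| ≥ R_β`. -/
theorem fbeta_ge_scattering_sol (a beta : ℝ) (ha : 0 < a)
    (hbeta : beta ∈ Set.Ioo (1/3 : ℝ) 1) :
    ∃ μ₀ > (0:ℝ), ∀ S : TangentScattering, S.a = a → S.beta = beta → S.mu ≤ μ₀ →
      (∀ r : ℝ, 0 ≤ r → S.jt r ≤ S.fext r) ∧
      (∀ z : EuclideanSpace ℝ (Fin 3), z ≠ 0 → S.jt ‖z‖ / ‖z‖ ≤ S.fbeta z) ∧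
      (∀ z : EuclideanSpace ℝ (Fin 3), z ≠ 0 →
        0 ≤ S.gbeta z ∧ S.gbeta z ≤ S.mu * S.a / ‖z‖) ∧
      (∀ z : EuclideanSpace ℝ (Fin 3), z ≠ 0 → S.Rb ≤ ‖z‖ → S.gbeta z = 0) := by
  obtain ⟨μ₀, hμ₀, hsmall⟩ := exists_forall_mul_le_rpow_div_two ha hbeta.2
  refine ⟨μ₀, hμ₀, ?_⟩
  rintro S rfl rfl hS
  exact fbeta_ge_scattering_sol_general S (hsmall S.mu S.hmu.1 hS)
end

section
/- Let N ≥ 2 be an integer, ε ∈ (0,1], μ := ε²/N, d > 1/3, and define Ā₁ := {(z₁,…,z_N) ∈ (ℝ³)^N : |z₁ − z_k| < μ^d for some k ∈ {2,…,N}}. There is a universal constant C such that for every ψ ∈ C_c^∞((ℝ³)^N; ℂ): ‖1_{Ā₁} ψ‖ ≤ C μ^{d − 1/3} ( ‖∂_{x₁} ψ‖ + ε ‖∇_{y₁} ψ‖ ). -/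
open MeasureTheory

/-!
Fix all particles but the first. The slice of `Ā₁` in the variable `z₁` is a union of fewer than
`N` balls of radius `r = μ^d`, so Hölder's inequality and the Sobolev inequality `Ẇ^{1,2} ⊆ L⁶` on
`ℝ³` bound `ψ` there by a constant times `(N r³)^{1/3} ‖∇_{z₁} ψ‖`. Applying this after the
linear change of variables `L (x, y) = (x, ε y)` replaces the gradient by `(∂_{x₁} ψ, ε ∇_{y₁} ψ)`
at the cost of a factor `|det L|^{-1/3}`, and `(N r³ / ε²)^{1/3} = μ^{d - 1/3}`. Since the constant
does not depend on the slice, squaring and integrating over the other particles concludes.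
-/

open Module (finrank)
open scoped ENNReal NNReal

theorem ofReal_mul_natCast_div_enorm_rpow {r x c : ℝ} (hr : 0 ≤ r) (hx : 0 < x) (hc : 0 ≤ c)
    (n : ℕ) :
    ENNReal.ofReal r * (n / ‖x‖ₑ) ^ c = ENNReal.ofReal (r / (x / n) ^ c) := by
  rw [Real.enorm_eq_ofReal hx.le, ← ENNReal.ofReal_natCast, ← ENNReal.ofReal_div_of_pos hx,
    ENNReal.ofReal_rpow_of_nonneg (by positivity) hc, ← ENNReal.ofReal_mul hr, div_eq_mul_inv r,
    ← Real.inv_rpow (by positivity), inv_div]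

theorem lpNorm_two_eq_sqrt_integral {α F : Type*} {_ : MeasurableSpace α} {μ : Measure α}
    [NormedAddCommGroup F] {f : α → F} (hf : AEStronglyMeasurable f μ) :
    lpNorm f 2 μ = √(∫ x, ‖f x‖ ^ 2 ∂μ) := by
  simp [lpNorm_eq_integral_norm_rpow_toReal two_ne_zero ENNReal.ofNat_ne_top hf,
    Real.sqrt_eq_rpow]

section Sobolev

variable {E F : Type*} [NormedAddCommGroup E] [NormedSpace ℝ E] [FiniteDimensional ℝ E]
  [MeasurableSpace E] [BorelSpace E] [NormedAddCommGroup F]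
  (μ : Measure E) [μ.IsAddHaarMeasure] {L : E →L[ℝ] E}

theorem eLpNorm_comp_continuousLinearMap (hL : L.det ≠ 0) (f : E → F) {p : ℝ≥0} :
    eLpNorm (f ∘ L) p μ = ‖L.det‖ₑ ^ (-(p : ℝ)⁻¹) * eLpNorm f p μ := by
  have hemb : MeasurableEmbedding L :=
    (L.toContinuousLinearEquivOfDetNeZero hL).toHomeomorph.measurableEmbedding
  have hmap : μ.map L = ‖L.det‖ₑ⁻¹ • μ := by
    rw [← enorm_inv hL, Real.enorm_eq_ofReal_abs]
    exact Measure.map_linearMap_addHaar_eq_smul_addHaar μ hL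
  rw [← hemb.eLpNorm_map_measure, hmap, eLpNorm_smul_measure_of_ne_top ENNReal.coe_ne_top,
    ENNReal.inv_rpow, ENNReal.rpow_neg, smul_eq_mul]
  simp

variable [InnerProductSpace ℝ F] {u : E → F}

theorem eLpNorm_le_eLpNorm_fderiv_comp_of_eq_inner (hu : ContDiff ℝ 1 u)
    (hcu : HasCompactSupport u) (hL : L.det ≠ 0) {p p' : ℝ≥0} (hp : 1 ≤ p)
    (hn : 0 < finrank ℝ E) (hp' : (p' : ℝ)⁻¹ = (p : ℝ)⁻¹ - (finrank ℝ E : ℝ)⁻¹) :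
    eLpNorm u p' μ ≤ eLpNormLESNormFDerivOfEqInnerConst μ p *
      ‖L.det‖ₑ ^ (-(finrank ℝ E : ℝ)⁻¹) * eLpNorm (fun x ↦ fderiv ℝ u x ∘L L) p μ := by
  have hD₀ : ‖L.det‖ₑ ≠ 0 := enorm_ne_zero.2 hL
  have hfderiv : fderiv ℝ (u ∘ L) = (fun x ↦ fderiv ℝ u x ∘L L) ∘ L := by
    ext1 x
    rw [fderiv_comp x (hu.differentiable one_ne_zero _) L.differentiableAt, L.fderiv]
    rfl
  have hsobolev := eLpNorm_le_eLpNorm_fderiv_of_eq_inner μ (hu.comp L.contDiff)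
    (hcu.comp_homeomorph (L.toContinuousLinearEquivOfDetNeZero hL).toHomeomorph) hp hn hp'
  rw [hfderiv, eLpNorm_comp_continuousLinearMap μ hL, eLpNorm_comp_continuousLinearMap μ hL]
    at hsobolev
  calc eLpNorm u p' μ
      = ‖L.det‖ₑ ^ (p' : ℝ)⁻¹ * (‖L.det‖ₑ ^ (-(p' : ℝ)⁻¹) * eLpNorm u p' μ) := by
        rw [← mul_assoc, ← ENNReal.rpow_add _ _ hD₀ enorm_ne_top]
        simp
    _ ≤ ‖L.det‖ₑ ^ (p' : ℝ)⁻¹ * (eLpNormLESNormFDerivOfEqInnerConst μ p *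
        (‖L.det‖ₑ ^ (-(p : ℝ)⁻¹) * eLpNorm (fun x ↦ fderiv ℝ u x ∘L L) p μ)) := by gcongr
    _ = eLpNormLESNormFDerivOfEqInnerConst μ p *
        (‖L.det‖ₑ ^ (p' : ℝ)⁻¹ * ‖L.det‖ₑ ^ (-(p : ℝ)⁻¹)) *
          eLpNorm (fun x ↦ fderiv ℝ u x ∘L L) p μ := by ring
    _ = _ := by rw [← ENNReal.rpow_add _ _ hD₀ enorm_ne_top, hp']; ring_nf

theorem eLpNorm_restrict_le_eLpNorm_fderiv_comp (hu : ContDiff ℝ 1 u)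
    (hcu : HasCompactSupport u) (hL : L.det ≠ 0) {p : ℝ≥0} (hp : 1 ≤ p)
    (hpn : p < finrank ℝ E) (B : Set E) :
    eLpNorm u p (μ.restrict B) ≤ eLpNormLESNormFDerivOfEqInnerConst μ p *
      (μ B / ‖L.det‖ₑ) ^ (finrank ℝ E : ℝ)⁻¹ * eLpNorm (fun x ↦ fderiv ℝ u x ∘L L) p μ := by
  have hp₀ : 0 < p := zero_lt_one.trans_le hp
  have hinv : (finrank ℝ E : ℝ≥0)⁻¹ < p⁻¹ := inv_strictAnti₀ hp₀ hpn
  let p' : ℝ≥0 := (p⁻¹ - (finrank ℝ E : ℝ≥0)⁻¹)⁻¹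
  have hp' : (p' : ℝ)⁻¹ = (p : ℝ)⁻¹ - (finrank ℝ E : ℝ)⁻¹ := by
    simp [p', NNReal.coe_sub hinv.le]
  have hpp' : p ≤ p' := (le_inv_comm₀ hp₀ (tsub_pos_of_lt hinv)).2 tsub_le_self
  calc eLpNorm u p (μ.restrict B)
      ≤ eLpNorm u p' (μ.restrict B) * μ B ^ (1 / (p : ℝ) - 1 / (p' : ℝ)) := by
        simpa using eLpNorm_le_eLpNorm_mul_rpow_measure_univ (μ := μ.restrict B)
          (ENNReal.coe_le_coe.2 hpp') hu.continuous.aestronglyMeasurable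
    _ ≤ eLpNorm u p' μ * μ B ^ (finrank ℝ E : ℝ)⁻¹ := by
        rw [one_div, one_div, hp', sub_sub_cancel]
        gcongr
        exact Measure.restrict_le_self
    _ ≤ eLpNormLESNormFDerivOfEqInnerConst μ p * ‖L.det‖ₑ ^ (-(finrank ℝ E : ℝ)⁻¹) *
          eLpNorm (fun x ↦ fderiv ℝ u x ∘L L) p μ * μ B ^ (finrank ℝ E : ℝ)⁻¹ := by
        gcongr
        exact eLpNorm_le_eLpNorm_fderiv_comp_of_eq_inner μ hu hcu hL hp
          (by exact_mod_cast hp₀.trans hpn) hp'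
    _ = _ := by
        rw [ENNReal.div_rpow_of_nonneg _ _ (by positivity), ENNReal.rpow_neg, div_eq_mul_inv]
        ring

end Sobolev

theorem eLpNorm_pi_le_of_forall_update {ι : Type*} [Fintype ι] [DecidableEq ι] {X : ι → Type*}
    [∀ i, MeasurableSpace (X i)] {μ : ∀ i, Measure (X i)} [∀ i, SigmaFinite (μ i)]
    {F G : Type*} [NormedAddCommGroup F] [NormedAddCommGroup G] {f : (∀ i, X i) → F}
    {g : (∀ i, X i) → G} (hf : StronglyMeasurable f) (hg : StronglyMeasurable g) (i : ι)
    {p : ℝ≥0} {K : ℝ≥0∞}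
    (h : ∀ z, eLpNorm (f ∘ Function.update z i) p (μ i) ≤
      K * eLpNorm (g ∘ Function.update z i) p (μ i)) :
    eLpNorm f p (Measure.pi μ) ≤ K * eLpNorm g p (Measure.pi μ) := by
  obtain rfl | hp := eq_or_ne p 0
  · simp
  have hslice : ∀ z, ∫⁻ x, ‖f (Function.update z i x)‖ₑ ^ (p : ℝ) ∂μ i ≤
      K ^ (p : ℝ) * ∫⁻ x, ‖g (Function.update z i x)‖ₑ ^ (p : ℝ) ∂μ i := fun z ↦ by
    have := ENNReal.rpow_le_rpow (h z) p.coe_nonneg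
    rwa [ENNReal.mul_rpow_of_nonneg _ _ p.coe_nonneg, eLpNorm_nnreal_pow_eq_lintegral hp,
      eLpNorm_nnreal_pow_eq_lintegral hp] at this
  have hint : ∫⁻ z, ‖f z‖ₑ ^ (p : ℝ) ∂Measure.pi μ ≤
      ∫⁻ z, K ^ (p : ℝ) * ‖g z‖ₑ ^ (p : ℝ) ∂Measure.pi μ := by
    refine lintegral_le_of_lmarginal_le {i} (hf.enorm.pow_const _)
      ((hg.enorm.pow_const _).const_mul _) fun z ↦ ?_
    rw [lmarginal_singleton, lmarginal_singleton]
    exact (hslice z).trans_eq (lintegral_const_mul _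
      ((hg.enorm.pow_const _).comp (measurable_update z))).symm
  rwa [← ENNReal.rpow_le_rpow_iff (z := p) (by positivity),
    ENNReal.mul_rpow_of_nonneg _ _ p.coe_nonneg, eLpNorm_nnreal_pow_eq_lintegral hp,
    eLpNorm_nnreal_pow_eq_lintegral hp, ← lintegral_const_mul _ (hg.enorm.pow_const _)]

theorem fderiv_comp_update {ι : Type*} [Finite ι] [DecidableEq ι] {E : ι → Type*}
    [∀ i, NormedAddCommGroup (E i)] [∀ i, NormedSpace ℝ (E i)] {F : Type*} [NormedAddCommGroup F]
    [NormedSpace ℝ F] {ψ : (∀ i, E i) → F} (hψ : Differentiable ℝ ψ) (z : ∀ i, E i) (i : ι)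
    (x : E i) :
    fderiv ℝ (ψ ∘ Function.update z i) x =
      fderiv ℝ ψ (Function.update z i x) ∘L .single ℝ E i := by
  cases nonempty_fintype ι
  rw [fderiv_comp x (hψ _) (hasFDerivAt_update z x).differentiableAt, fderiv_update]
  congr 1
  ext v j
  obtain rfl | hj := eq_or_ne j i
  · simp
  · simp [hj]

/-- The set `Ā₁` for the particle `i`: the configurations in which some other particle is at
distance less than `r` from the particle `i`. -/
def interactionNeighbourhood {ι E : Type*} [NormedAddCommGroup E] (i : ι) (r : ℝ) :
    Set (ι → E) :=
  {z | ∃ k, k ≠ i ∧ ‖z i - z k‖ < r}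

section Interaction

variable {ι E F : Type*} [NormedAddCommGroup E]

theorem isOpen_interactionNeighbourhood (i : ι) (r : ℝ) :
    IsOpen (interactionNeighbourhood i r : Set (ι → E)) := by
  simp only [interactionNeighbourhood, Set.ofPred_exists]
  exact isOpen_iUnion fun k ↦ isOpen_const.and (isOpen_lt (by fun_prop) continuous_const)

variable [Fintype ι] [DecidableEq ι]

theorem preimage_update_interactionNeighbourhood (i : ι) (r : ℝ) (z : ι → E) :
    Function.update z i ⁻¹' interactionNeighbourhood i r =
      ⋃ k ∈ ({i}ᶜ : Finset ι), Metric.ball (z k) r := by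
  ext x
  simp only [interactionNeighbourhood, Set.mem_preimage, Set.mem_ofPred_eq, Set.mem_iUnion,
    Finset.mem_compl, Finset.mem_singleton, mem_ball_iff_norm, Function.update_self, exists_prop]
  refine exists_congr fun k ↦ and_congr_right fun hk ↦ ?_
  rw [Function.update_of_ne hk]

variable [NormedSpace ℝ E] [FiniteDimensional ℝ E] [MeasurableSpace E] [BorelSpace E]
  (μ : Measure E) [μ.IsAddHaarMeasure]

theorem measure_preimage_update_interactionNeighbourhood_le (i : ι) {r : ℝ} (hr : 0 < r)
    (z : ι → E) :
    μ (Function.update z i ⁻¹' interactionNeighbourhood i r) ≤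
      Fintype.card ι * ENNReal.ofReal r ^ finrank ℝ E * μ (Metric.ball 0 1) := by
  rw [preimage_update_interactionNeighbourhood]
  calc μ (⋃ k ∈ ({i}ᶜ : Finset ι), Metric.ball (z k) r)
      ≤ ∑ k ∈ ({i}ᶜ : Finset ι), μ (Metric.ball (z k) r) := measure_biUnion_finset_le _ _
    _ ≤ ∑ k, μ (Metric.ball (z k) r) := Finset.sum_le_univ_sum_of_nonneg fun _ ↦ zero_le
    _ = _ := by
        simp [Measure.addHaar_ball_of_pos μ _ hr, ENNReal.ofReal_pow hr.le, mul_assoc]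

theorem rpow_measure_preimage_update_interactionNeighbourhood_div_le (hn : finrank ℝ E ≠ 0)
    (i : ι) {r : ℝ} (hr : 0 < r) (z : ι → E) (D : ℝ≥0∞) :
    (μ (Function.update z i ⁻¹' interactionNeighbourhood i r) / D) ^ (finrank ℝ E : ℝ)⁻¹ ≤
      ENNReal.ofReal r * (Fintype.card ι / D) ^ (finrank ℝ E : ℝ)⁻¹ *
        μ (Metric.ball 0 1) ^ (finrank ℝ E : ℝ)⁻¹ := by
  have hinv : 0 ≤ (finrank ℝ E : ℝ)⁻¹ := by positivity
  calc (μ (Function.update z i ⁻¹' interactionNeighbourhood i r) / D) ^ (finrank ℝ E : ℝ)⁻¹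
      ≤ (Fintype.card ι * ENNReal.ofReal r ^ finrank ℝ E * μ (Metric.ball 0 1) / D) ^
          (finrank ℝ E : ℝ)⁻¹ := by
        gcongr
        exact measure_preimage_update_interactionNeighbourhood_le μ i hr z
    _ = (ENNReal.ofReal r ^ finrank ℝ E * (Fintype.card ι / D) * μ (Metric.ball 0 1)) ^
          (finrank ℝ E : ℝ)⁻¹ := by
        simp only [div_eq_mul_inv]
        ring_nf
    _ = _ := by
        rw [ENNReal.mul_rpow_of_nonneg _ _ hinv, ENNReal.mul_rpow_of_nonneg _ _ hinv,
          ENNReal.pow_rpow_inv_natCast hn]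

/-- The constant of the interaction estimate, uniform in the number of particles and in the
weights on the derivatives: the Sobolev constant of `μ` times `μ (ball 0 1) ^ n⁻¹`, where `n` is
the dimension of the one-particle space. -/
noncomputable def interactionConst (p : ℝ≥0) : ℝ≥0 :=
  eLpNormLESNormFDerivOfEqInnerConst μ p *
    (μ (Metric.ball 0 1)).toNNReal ^ (finrank ℝ E : ℝ)⁻¹

theorem coe_interactionConst (p : ℝ≥0) :
    (interactionConst μ p : ℝ≥0∞) = eLpNormLESNormFDerivOfEqInnerConst μ p *
      μ (Metric.ball 0 1) ^ (finrank ℝ E : ℝ)⁻¹ := by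
  rw [interactionConst, ENNReal.coe_mul, ENNReal.coe_rpow_of_nonneg _ (by positivity),
    ENNReal.coe_toNNReal measure_ball_lt_top.ne]

variable [NormedAddCommGroup F] [InnerProductSpace ℝ F] {L : E →L[ℝ] E} {ψ : (ι → E) → F}

theorem eLpNorm_restrict_interactionNeighbourhood_le (hψ : ContDiff ℝ 1 ψ)
    (hcψ : HasCompactSupport ψ) (hL : L.det ≠ 0) (i : ι) {r : ℝ} (hr : 0 < r) {p : ℝ≥0}
    (hp : 1 ≤ p) (hpn : p < finrank ℝ E) :
    eLpNorm ψ p ((Measure.pi fun _ ↦ μ).restrict (interactionNeighbourhood i r)) ≤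
      interactionConst μ p * (ENNReal.ofReal r *
        (Fintype.card ι / ‖L.det‖ₑ) ^ (finrank ℝ E : ℝ)⁻¹) *
        eLpNorm (fun z ↦ fderiv ℝ ψ z ∘L .single ℝ (fun _ ↦ E) i ∘L L) p
          (Measure.pi fun _ ↦ μ) := by
  have hn : finrank ℝ E ≠ 0 := by exact_mod_cast ((zero_lt_one.trans_le hp).trans hpn).ne'
  have hA := (isOpen_interactionNeighbourhood (E := E) i r).measurableSet
  rw [← eLpNorm_indicator_eq_eLpNorm_restrict hA]
  refine eLpNorm_pi_le_of_forall_update (hψ.continuous.stronglyMeasurable.indicator hA)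
    ((hψ.continuous_fderiv one_ne_zero).clm_comp continuous_const).stronglyMeasurable i fun z ↦ ?_
  set B : Set E := Function.update z i ⁻¹' interactionNeighbourhood i r
  have hindicator : (interactionNeighbourhood i r).indicator ψ ∘ Function.update z i =
      B.indicator (ψ ∘ Function.update z i) :=
    funext fun _ ↦ (Set.indicator_comp_right _).symm
  have hfderiv : (fun x ↦ fderiv ℝ (ψ ∘ Function.update z i) x ∘L L) =
      (fun z ↦ fderiv ℝ ψ z ∘L .single ℝ (fun _ ↦ E) i ∘L L) ∘ Function.update z i :=
    funext fun x ↦ congrArg (· ∘L L) (fderiv_comp_update (hψ.differentiable one_ne_zero) z i x)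
  rw [hindicator, eLpNorm_indicator_eq_eLpNorm_restrict (measurable_update z hA), ← hfderiv]
  calc eLpNorm (ψ ∘ Function.update z i) p (μ.restrict B)
      ≤ eLpNormLESNormFDerivOfEqInnerConst μ p * (μ B / ‖L.det‖ₑ) ^ (finrank ℝ E : ℝ)⁻¹ *
          eLpNorm (fun x ↦ fderiv ℝ (ψ ∘ Function.update z i) x ∘L L) p μ :=
        eLpNorm_restrict_le_eLpNorm_fderiv_comp μ (hψ.comp (contDiff_update 1 z i))
          (hcψ.comp_isClosedEmbedding (isClosedEmbedding_update z i)) hL hp hpn B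
    _ ≤ eLpNormLESNormFDerivOfEqInnerConst μ p * (ENNReal.ofReal r *
          (Fintype.card ι / ‖L.det‖ₑ) ^ (finrank ℝ E : ℝ)⁻¹ *
            μ (Metric.ball 0 1) ^ (finrank ℝ E : ℝ)⁻¹) *
          eLpNorm (fun x ↦ fderiv ℝ (ψ ∘ Function.update z i) x ∘L L) p μ := by
        gcongr
        exact rpow_measure_preimage_update_interactionNeighbourhood_div_le μ hn i hr z _
    _ = _ := by
        rw [coe_interactionConst]
        ring

end Interaction

section Anisotropic

variable {F : Type*} [NormedAddCommGroup F] [NormedSpace ℝ F]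

theorem norm_comp_toEuclideanCLM_diagonal_le {ι : Type*} [Fintype ι] [DecidableEq ι]
    (A : EuclideanSpace ℝ ι →L[ℝ] F) (c : ι → ℝ) :
    ‖A ∘L Matrix.toEuclideanCLM (𝕜 := ℝ) (Matrix.diagonal c)‖ ≤
      √(∑ i, (c i * ‖A (EuclideanSpace.single i 1)‖) ^ 2) := by
  refine ContinuousLinearMap.opNorm_le_bound _ (by positivity) fun v ↦ ?_
  have hv : Matrix.toEuclideanCLM (𝕜 := ℝ) (Matrix.diagonal c) v =
      ∑ i, (c i * v i) • EuclideanSpace.single i (1 : ℝ) := by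
    rw [← (EuclideanSpace.basisFun ι ℝ).sum_repr (Matrix.toEuclideanCLM (𝕜 := ℝ) _ v)]
    simp [Matrix.mulVec_diagonal]
  calc ‖A (Matrix.toEuclideanCLM (𝕜 := ℝ) (Matrix.diagonal c) v)‖
      ≤ ∑ i, |c i * v i| * ‖A (EuclideanSpace.single i 1)‖ := by
        rw [hv, map_sum]
        exact norm_sum_le_of_le _ fun i _ ↦ by rw [map_smul, norm_smul, Real.norm_eq_abs]
    _ = ∑ i, (|c i| * ‖A (EuclideanSpace.single i 1)‖) * |v i| := by
        simp only [abs_mul, mul_right_comm]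
    _ ≤ √(∑ i, (|c i| * ‖A (EuclideanSpace.single i 1)‖) ^ 2) * √(∑ i, |v i| ^ 2) :=
        Real.sum_mul_le_sqrt_mul_sqrt _ _ _
    _ = _ := by simp [EuclideanSpace.norm_eq, mul_pow]

/-- The linear map `(x, y) ↦ (x, ε y)` of `ℝ × ℝ²`, encoded as `ℝ³`. Precomposing a differential
with it puts the weight `ε` on the gradient in `y`. -/
noncomputable def anisotropicScaling (ε : ℝ) :
    EuclideanSpace ℝ (Fin 3) →L[ℝ] EuclideanSpace ℝ (Fin 3) :=
  Matrix.toEuclideanCLM (𝕜 := ℝ) (Matrix.diagonal ![1, ε, ε])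

theorem det_anisotropicScaling (ε : ℝ) : (anisotropicScaling ε).det = ε ^ 2 := by
  have h : (anisotropicScaling ε).det = (Matrix.diagonal ![1, ε, ε]).det :=
    LinearMap.det_toLpLin 2 _
  simp [h, Matrix.det_diagonal, Fin.prod_univ_three, sq]

theorem norm_comp_anisotropicScaling_le (A : EuclideanSpace ℝ (Fin 3) →L[ℝ] F) {ε : ℝ}
    (hε : 0 ≤ ε) :
    ‖A ∘L anisotropicScaling ε‖ ≤ ‖A (EuclideanSpace.single 0 1)‖ +
      ε * √(‖A (EuclideanSpace.single 1 1)‖ ^ 2 + ‖A (EuclideanSpace.single 2 1)‖ ^ 2) := by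
  have hsum : ∑ j, (![1, ε, ε] j * ‖A (EuclideanSpace.single j 1)‖) ^ 2 =
      ‖A (EuclideanSpace.single 0 1)‖ ^ 2 + ε ^ 2 *
        (‖A (EuclideanSpace.single 1 1)‖ ^ 2 + ‖A (EuclideanSpace.single 2 1)‖ ^ 2) := by
    simp [Fin.sum_univ_three, mul_pow, mul_add, add_assoc]
  calc ‖A ∘L anisotropicScaling ε‖
      ≤ √(∑ j, (![1, ε, ε] j * ‖A (EuclideanSpace.single j 1)‖) ^ 2) :=
        norm_comp_toEuclideanCLM_diagonal_le A _
    _ ≤ _ := by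
        refine Real.sqrt_le_iff.2 ⟨by positivity, ?_⟩
        rw [hsum, add_sq', mul_pow, Real.sq_sqrt (by positivity)]
        exact le_add_of_nonneg_right (by positivity)

theorem lpNorm_comp_anisotropicScaling_le {α : Type*} {_ : MeasurableSpace α} {μ : Measure α}
    {T : α → EuclideanSpace ℝ (Fin 3) →L[ℝ] F} (hT : MemLp T 2 μ) {ε : ℝ} (hε : 0 ≤ ε) :
    lpNorm (fun z ↦ T z ∘L anisotropicScaling ε) 2 μ ≤
      √(∫ z, ‖T z (EuclideanSpace.single 0 1)‖ ^ 2 ∂μ) +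
        ε * √(∫ z, (‖T z (EuclideanSpace.single 1 1)‖ ^ 2 +
          ‖T z (EuclideanSpace.single 2 1)‖ ^ 2) ∂μ) := by
  have happly (v : EuclideanSpace ℝ (Fin 3)) : MemLp (fun z ↦ ‖T z v‖) 2 μ :=
    ((ContinuousLinearMap.apply ℝ F v).comp_memLp' hT).norm
  let g : α → ℝ := fun z ↦
    √(‖T z (EuclideanSpace.single 1 1)‖ ^ 2 + ‖T z (EuclideanSpace.single 2 1)‖ ^ 2)
  have hgsq (z : α) : g z ^ 2 =
      ‖T z (EuclideanSpace.single 1 1)‖ ^ 2 + ‖T z (EuclideanSpace.single 2 1)‖ ^ 2 :=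
    Real.sq_sqrt (by positivity)
  have hg : MemLp g 2 μ := by
    refine (memLp_two_iff_integrable_sq ?_).2 ?_
    · exact Real.continuous_sqrt.comp_aestronglyMeasurable
        (((happly _).aestronglyMeasurable.pow 2).add ((happly _).aestronglyMeasurable.pow 2))
    · simp only [hgsq]
      exact (happly _).integrable_sq.add (happly _).integrable_sq
  calc lpNorm (fun z ↦ T z ∘L anisotropicScaling ε) 2 μ
      ≤ lpNorm ((fun z ↦ ‖T z (EuclideanSpace.single 0 1)‖) + ε • g) 2 μ :=
        lpNorm_mono_real ((happly _).add (hg.const_smul ε)) fun z ↦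
          norm_comp_anisotropicScaling_le (T z) hε
    _ ≤ lpNorm (fun z ↦ ‖T z (EuclideanSpace.single 0 1)‖) 2 μ + lpNorm (ε • g) 2 μ :=
        lpNorm_add_le (happly _) one_le_two
    _ = _ := by
        rw [lpNorm_const_smul, lpNorm_two_eq_sqrt_integral hg.aestronglyMeasurable,
          lpNorm_two_eq_sqrt_integral (happly _).aestronglyMeasurable]
        simp [hgsq, abs_of_nonneg hε]

end Anisotropic

theorem interaction_neighbourhood_bound_general {ι F : Type*} [Fintype ι] [DecidableEq ι]
    [NormedAddCommGroup F] [InnerProductSpace ℝ F] (i : ι) {ε r : ℝ} (hε : 0 < ε) (hr : 0 < r)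
    {ψ : (ι → EuclideanSpace ℝ (Fin 3)) → F} (hψ : ContDiff ℝ 1 ψ) (hcψ : HasCompactSupport ψ) :
    √(∫ z in interactionNeighbourhood i r, ‖ψ z‖ ^ 2) ≤
      interactionConst (volume : Measure (EuclideanSpace ℝ (Fin 3))) 2 *
        (r / (ε ^ 2 / Fintype.card ι) ^ (1 / 3 : ℝ)) *
        (√(∫ z, ‖fderiv ℝ ψ z (Pi.single i (EuclideanSpace.single 0 1))‖ ^ 2) +
          ε * √(∫ z, (‖fderiv ℝ ψ z (Pi.single i (EuclideanSpace.single 1 1))‖ ^ 2 +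
            ‖fderiv ℝ ψ z (Pi.single i (EuclideanSpace.single 2 1))‖ ^ 2))) := by
  let T : (ι → EuclideanSpace ℝ (Fin 3)) → EuclideanSpace ℝ (Fin 3) →L[ℝ] F := fun z ↦
    fderiv ℝ ψ z ∘L .single ℝ (fun _ ↦ EuclideanSpace ℝ (Fin 3)) i
  have hTc : Continuous T := (hψ.continuous_fderiv one_ne_zero).clm_comp continuous_const
  have hT : MemLp T 2 volume := hTc.memLp_of_hasCompactSupport
    ((hcψ.fderiv ℝ).comp_left (g := (· ∘L _)) (ContinuousLinearMap.zero_comp _))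
  have hdet : (anisotropicScaling ε).det ≠ 0 := by rw [det_anisotropicScaling]; positivity
  have hbound := eLpNorm_restrict_interactionNeighbourhood_le volume hψ hcψ hdet i hr (p := 2)
    one_le_two (by norm_num)
  rw [det_anisotropicScaling, finrank_euclideanSpace_fin, Nat.cast_ofNat, inv_eq_one_div,
    ofReal_mul_natCast_div_enorm_rpow hr.le (by positivity) (by positivity)] at hbound
  have hTL : MemLp (fun z ↦ T z ∘L anisotropicScaling ε) 2 volume :=
    ContinuousLinearMap.comp_memLp' ((ContinuousLinearMap.compL ℝ (EuclideanSpace ℝ (Fin 3))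
      (EuclideanSpace ℝ (Fin 3)) F).flip (anisotropicScaling ε)) hT
  calc √(∫ z in interactionNeighbourhood i r, ‖ψ z‖ ^ 2)
      = (eLpNorm ψ 2 (volume.restrict (interactionNeighbourhood i r))).toReal := by
        rw [toReal_eLpNorm hψ.continuous.aestronglyMeasurable,
          lpNorm_two_eq_sqrt_integral hψ.continuous.aestronglyMeasurable]
    _ ≤ interactionConst (volume : Measure (EuclideanSpace ℝ (Fin 3))) 2 *
          (r / (ε ^ 2 / Fintype.card ι) ^ (1 / 3 : ℝ)) *
            lpNorm (fun z ↦ T z ∘L anisotropicScaling ε) 2 volume := by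
        refine ENNReal.toReal_le_of_le_ofReal (mul_nonneg (by positivity) lpNorm_nonneg)
          (hbound.trans_eq ?_)
        rw [ENNReal.ofReal_mul, ENNReal.ofReal_mul, ENNReal.ofReal_coe_nnreal, ofReal_lpNorm hTL]
        · rfl
        all_goals positivity
    _ ≤ _ := by
        gcongr
        exact lpNorm_comp_anisotropicScaling_le hT hε.le

/-- There is a universal constant `C` such that for every `N ≥ 2`, `ε ∈ (0,1]`, `μ := ε²/N`,
`d > 1/3`, and every smooth compactly supported `ψ` on `(ℝ³)^N`, with
`Ā₁ := {z : |z₁ - z_k| < μ^d for some k ≠ 1}`: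
`‖1_{Ā₁} ψ‖ ≤ C μ^(d - 1/3) (‖∂_{x₁}ψ‖ + ε ‖∇_{y₁}ψ‖)`. -/
theorem interaction_neighbourhood_bound :
    ∃ C > (0:ℝ), ∀ N : ℕ, ∀ hN : 2 ≤ N, ∀ ε : ℝ, ε ∈ Set.Ioc (0:ℝ) 1 →
      ∀ d : ℝ, 1/3 < d →
      ∀ ψ : (Fin N → EuclideanSpace ℝ (Fin 3)) → ℂ, ContDiff ℝ (⊤ : ℕ∞) ψ → HasCompactSupport ψ →
        Real.sqrt (∫ z in {z : Fin N → EuclideanSpace ℝ (Fin 3) |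
            ∃ k : Fin N, k ≠ ⟨0, by omega⟩ ∧
              ‖z ⟨0, by omega⟩ - z k‖ < (ε ^ 2 / N) ^ d}, ‖ψ z‖ ^ 2) ≤
          C * (ε ^ 2 / N) ^ (d - 1/3) *
            (Real.sqrt (∫ z : Fin N → EuclideanSpace ℝ (Fin 3),
                ‖fderiv ℝ ψ z (Pi.single (⟨0, by omega⟩ : Fin N)
                  (EuclideanSpace.single (0 : Fin 3) (1:ℝ)))‖ ^ 2) +
              ε * Real.sqrt (∫ z : Fin N → EuclideanSpace ℝ (Fin 3),
                (‖fderiv ℝ ψ z (Pi.single (⟨0, by omega⟩ : Fin N)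
                    (EuclideanSpace.single (1 : Fin 3) (1:ℝ)))‖ ^ 2 +
                  ‖fderiv ℝ ψ z (Pi.single (⟨0, by omega⟩ : Fin N)
                    (EuclideanSpace.single (2 : Fin 3) (1:ℝ)))‖ ^ 2))) := by
  let K : ℝ := interactionConst (volume : Measure (EuclideanSpace ℝ (Fin 3))) 2
  refine ⟨K + 1, by positivity, fun N hN ε hε d _ ψ hψ hcψ ↦ ?_⟩
  have hμ : 0 < ε ^ 2 / N := div_pos (pow_pos hε.1 2) (by exact_mod_cast zero_lt_two.trans_le hN)
  have hbound := interaction_neighbourhood_bound_general (⟨0, by omega⟩ : Fin N) hε.1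
    (Real.rpow_pos_of_pos hμ d) (hψ.of_le (by exact_mod_cast le_top)) hcψ
  rw [Fintype.card_fin, ← Real.rpow_sub hμ] at hbound
  refine hbound.trans ?_
  gcongr
  · have := hε.1
    positivity
  · exact (lt_add_one K).le
end
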